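/- Let γ: U → Mₙ(ℂ) be holomorphic (∂_{j̄}γ = 0 on U for all j) and C², let G: U → GL_{2n}(ℂ) be C², and set G̃ := (I − N(conj γ))·G·(I + N(γ)). Define the Chern curvature endomorphisms Ω_{ij̄} := −∂_{j̄}(G⁻¹·∂ᵢG) and Ω̃_{ij̄} := −∂_{j̄}(G̃⁻¹·∂ᵢG̃). Then for all i, j: Ω̃_{ij̄} = (I − N(γ))·Ω_{ij̄}·(I + N(γ)). Consequently, for any map g: U → (n×n Hermitian positive-definite matrices) with inverse entries g^{j̄i}, the traced curvatures satisfy Σ_{i,j} g^{j̄i}·Ω̃_{ij̄} = (I − N(γ))·(Σ_{i,j} g^{j̄i}·Ω_{ij̄})·(I + N(γ)). -/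

import Mathlib

open Matrix

noncomputable section

/-- The Wirtinger derivative `∂ᵢ f = ½(∂f/∂xᵢ − i·∂f/∂yᵢ)` of a function `f : ℂⁿ → ℂ`,
computed via the real Fréchet derivative. -/
def wd {n : ℕ} (i : Fin n) (f : (Fin n → ℂ) → ℂ) (z : Fin n → ℂ) : ℂ :=
  (fderiv ℝ f z (Pi.single i 1) - Complex.I * fderiv ℝ f z (Pi.single i Complex.I)) / 2

/-- The conjugate Wirtinger derivative `∂_{ī} f = ½(∂f/∂xᵢ + i·∂f/∂yᵢ)`. -/
def wdb {n : ℕ} (i : Fin n) (f : (Fin n → ℂ) → ℂ) (z : Fin n → ℂ) : ℂ :=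
  (fderiv ℝ f z (Pi.single i 1) + Complex.I * fderiv ℝ f z (Pi.single i Complex.I)) / 2

/-- Entrywise Wirtinger derivative of a matrix-valued map. -/
def wdM {n : ℕ} {ι κ : Type*} (i : Fin n) (A : (Fin n → ℂ) → Matrix ι κ ℂ)
    (z : Fin n → ℂ) : Matrix ι κ ℂ :=
  Matrix.of fun a b => wd i (fun w => A w a b) z

/-- Entrywise conjugate Wirtinger derivative of a matrix-valued map. -/
def wdbM {n : ℕ} {ι κ : Type*} (i : Fin n) (A : (Fin n → ℂ) → Matrix ι κ ℂ)
    (z : Fin n → ℂ) : Matrix ι κ ℂ :=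
  Matrix.of fun a b => wdb i (fun w => A w a b) z

open scoped ComplexOrder

/-- The block matrix `N(γ) = [[0,0],[γ,0]]`. -/
def Nmat {n : ℕ} (γ : Matrix (Fin n) (Fin n) ℂ) :
    Matrix (Fin n ⊕ Fin n) (Fin n ⊕ Fin n) ℂ :=
  Matrix.fromBlocks 0 0 γ 0

/-- Entrywise real differentiability. -/
def DM {n : ℕ} {ι κ : Type*} (A : (Fin n → ℂ) → Matrix ι κ ℂ) (z : Fin n → ℂ) : Prop :=
  ∀ a b, DifferentiableAt ℝ (fun w => A w a b) z

theorem DM.mul {n : ℕ} {ι κ μ : Type*} [Fintype κ] {A : (Fin n → ℂ) → Matrix ι κ ℂ}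
    {B : (Fin n → ℂ) → Matrix κ μ ℂ} {z : Fin n → ℂ} (hA : DM A z) (hB : DM B z) :
    DM (fun w => A w * B w) z := by
  intro a b
  simp only [Matrix.mul_apply]
  exact DifferentiableAt.fun_sum fun c _ => (hA a c).mul (hB c b)

theorem wd_mul {n : ℕ} (i : Fin n) {f g : (Fin n → ℂ) → ℂ} {z : Fin n → ℂ}
    (hf : DifferentiableAt ℝ f z) (hg : DifferentiableAt ℝ g z) :
    wd i (fun w => f w * g w) z = wd i f z * g z + f z * wd i g z := by
  simp only [wd, fderiv_fun_mul hf hg, _root_.add_apply, _root_.smul_apply, smul_eq_mul]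
  ring

theorem wdb_mul {n : ℕ} (i : Fin n) {f g : (Fin n → ℂ) → ℂ} {z : Fin n → ℂ}
    (hf : DifferentiableAt ℝ f z) (hg : DifferentiableAt ℝ g z) :
    wdb i (fun w => f w * g w) z = wdb i f z * g z + f z * wdb i g z := by
  simp only [wdb, fderiv_fun_mul hf hg, _root_.add_apply, _root_.smul_apply, smul_eq_mul]
  ring

theorem wd_sum {n : ℕ} {κ : Type*} [Fintype κ] (i : Fin n) {f : κ → (Fin n → ℂ) → ℂ}
    {z : Fin n → ℂ} (hf : ∀ c, DifferentiableAt ℝ (f c) z) :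
    wd i (fun w => ∑ c, f c w) z = ∑ c, wd i (f c) z := by
  simp only [wd, fderiv_fun_sum (fun c _ => hf c), _root_.sum_apply,
    Finset.mul_sum, ← Finset.sum_sub_distrib, Finset.sum_div]

theorem wdb_sum {n : ℕ} {κ : Type*} [Fintype κ] (i : Fin n) {f : κ → (Fin n → ℂ) → ℂ}
    {z : Fin n → ℂ} (hf : ∀ c, DifferentiableAt ℝ (f c) z) :
    wdb i (fun w => ∑ c, f c w) z = ∑ c, wdb i (f c) z := by
  simp only [wdb, fderiv_fun_sum (fun c _ => hf c), _root_.sum_apply,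
    Finset.mul_sum, ← Finset.sum_add_distrib, Finset.sum_div]

theorem wdM_mul {n : ℕ} {ι κ μ : Type*} [Fintype κ] (i : Fin n)
    {A : (Fin n → ℂ) → Matrix ι κ ℂ}
    {B : (Fin n → ℂ) → Matrix κ μ ℂ} {z : Fin n → ℂ} (hA : DM A z) (hB : DM B z) :
    wdM i (fun w => A w * B w) z = wdM i A z * B z + A z * wdM i B z := by
  ext a b
  simp only [wdM, Matrix.of_apply, Matrix.add_apply, Matrix.mul_apply]
  rw [wd_sum i (fun c => (hA a c).fun_mul (hB c b)), ← Finset.sum_add_distrib]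
  exact Finset.sum_congr rfl fun c _ => wd_mul i (hA a c) (hB c b)

theorem wdbM_mul {n : ℕ} {ι κ μ : Type*} [Fintype κ] (i : Fin n)
    {A : (Fin n → ℂ) → Matrix ι κ ℂ}
    {B : (Fin n → ℂ) → Matrix κ μ ℂ} {z : Fin n → ℂ} (hA : DM A z) (hB : DM B z) :
    wdbM i (fun w => A w * B w) z = wdbM i A z * B z + A z * wdbM i B z := by
  ext a b
  simp only [wdbM, Matrix.of_apply, Matrix.add_apply, Matrix.mul_apply]
  rw [wdb_sum i (fun c => (hA a c).fun_mul (hB c b)), ← Finset.sum_add_distrib]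
  exact Finset.sum_congr rfl fun c _ => wdb_mul i (hA a c) (hB c b)

theorem wdbM_add {n : ℕ} {ι κ : Type*} (i : Fin n)
    {A B : (Fin n → ℂ) → Matrix ι κ ℂ} {z : Fin n → ℂ} (hA : DM A z) (hB : DM B z) :
    wdbM i (fun w => A w + B w) z = wdbM i A z + wdbM i B z := by
  ext a b
  simp only [wdbM, wdb, Matrix.of_apply, Matrix.add_apply, fderiv_fun_add (hA a b) (hB a b),
    _root_.add_apply]
  ring

theorem wdbM_congr {n : ℕ} {ι κ : Type*} (i : Fin n)
    {A B : (Fin n → ℂ) → Matrix ι κ ℂ} {z : Fin n → ℂ} {U : Set (Fin n → ℂ)}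
    (hU : IsOpen U) (hz : z ∈ U) (h : ∀ w ∈ U, A w = B w) :
    wdbM i A z = wdbM i B z := by
  ext a b
  have : (fun w => A w a b) =ᶠ[nhds z] (fun w => B w a b) := by
    filter_upwards [hU.mem_nhds hz] with w hw
    rw [h w hw]
  simp only [wdbM, wdb, Matrix.of_apply, this.fderiv_eq]

theorem wd_conj {n : ℕ} (i : Fin n) (f : (Fin n → ℂ) → ℂ) (z : Fin n → ℂ) :
    wd i (fun w => (starRingEnd ℂ) (f w)) z = (starRingEnd ℂ) (wdb i f z) := by
  have h : fderiv ℝ (fun w => (starRingEnd ℂ) (f w)) z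
      = (Complex.conjCLE : ℂ →L[ℝ] ℂ).comp (fderiv ℝ f z) :=
    Complex.conjCLE.comp_fderiv
  simp only [wd, wdb, h]
  simp [sub_eq_add_neg, Complex.conj_ofNat]

theorem wd_neg {n : ℕ} (i : Fin n) (f : (Fin n → ℂ) → ℂ) (z : Fin n → ℂ) :
    wd i (fun w => - (f w)) z = - wd i f z := by
  simp only [wd, fderiv_fun_neg, _root_.neg_apply]
  ring

theorem wd_const {n : ℕ} (i : Fin n) (c : ℂ) (z : Fin n → ℂ) :
    wd i (fun _ => c) z = 0 := by
  simp [wd]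

theorem wdb_const {n : ℕ} (i : Fin n) (c : ℂ) (z : Fin n → ℂ) :
    wdb i (fun _ => c) z = 0 := by
  simp [wdb]

theorem wd_const_add {n : ℕ} (i : Fin n) (c : ℂ) (f : (Fin n → ℂ) → ℂ) (z : Fin n → ℂ) :
    wd i (fun w => c + f w) z = wd i f z := by
  simp [wd]

theorem wdb_const_add {n : ℕ} (i : Fin n) (c : ℂ) (f : (Fin n → ℂ) → ℂ) (z : Fin n → ℂ) :
    wdb i (fun w => c + f w) z = wdb i f z := by
  simp [wdb]

theorem wdb_neg {n : ℕ} (i : Fin n) (f : (Fin n → ℂ) → ℂ) (z : Fin n → ℂ) :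
    wdb i (fun w => - (f w)) z = - wdb i f z := by
  simp only [wdb, fderiv_fun_neg, _root_.neg_apply]
  ring

theorem diff_fderiv {n : ℕ} {f : (Fin n → ℂ) → ℂ} {z : Fin n → ℂ}
    (hf : ContDiffAt ℝ 2 f z) : DifferentiableAt ℝ (fderiv ℝ f) z :=
  (hf.fderiv_right (m := 1) (by norm_num)).differentiableAt (by norm_num)

theorem diff_wd {n : ℕ} (i : Fin n) {f : (Fin n → ℂ) → ℂ} {z : Fin n → ℂ}
    (hf : ContDiffAt ℝ 2 f z) : DifferentiableAt ℝ (wd i f) z := by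
  have h := diff_fderiv hf
  unfold wd
  fun_prop

theorem fderiv_fderiv_apply {n : ℕ} {f : (Fin n → ℂ) → ℂ} {z : Fin n → ℂ}
    (hf : ContDiffAt ℝ 2 f z) (u v : Fin n → ℂ) :
    fderiv ℝ (fun w => fderiv ℝ f w v) z u = fderiv ℝ (fderiv ℝ f) z u v := by
  rw [fderiv_clm_apply (diff_fderiv hf) (differentiableAt_const v)]
  simp

theorem fderiv_wd {n : ℕ} (i : Fin n) {f : (Fin n → ℂ) → ℂ} {z : Fin n → ℂ}
    (hf : ContDiffAt ℝ 2 f z) (u : Fin n → ℂ) :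
    fderiv ℝ (wd i f) z u = (fderiv ℝ (fderiv ℝ f) z u (Pi.single i 1)
      - Complex.I * fderiv ℝ (fderiv ℝ f) z u (Pi.single i Complex.I)) / 2 := by
  have h := diff_fderiv hf
  have h1 : ∀ v, DifferentiableAt ℝ (fun w => fderiv ℝ f w v) z := fun v => by fun_prop
  have := ((((h1 (Pi.single i 1)).hasFDerivAt.sub
    ((h1 (Pi.single i Complex.I)).hasFDerivAt.const_mul Complex.I)).mul_const (2⁻¹ : ℂ)).fderiv)
  have e : wd i f = fun w => (fderiv ℝ f w (Pi.single i 1)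
    - Complex.I * fderiv ℝ f w (Pi.single i Complex.I)) * (2⁻¹ : ℂ) := by
    funext w; simp [wd, div_eq_mul_inv]
  rw [e]
  erw [this]
  simp [fderiv_fderiv_apply hf]
  ring

theorem fderiv_wdb {n : ℕ} (i : Fin n) {f : (Fin n → ℂ) → ℂ} {z : Fin n → ℂ}
    (hf : ContDiffAt ℝ 2 f z) (u : Fin n → ℂ) :
    fderiv ℝ (wdb i f) z u = (fderiv ℝ (fderiv ℝ f) z u (Pi.single i 1)
      + Complex.I * fderiv ℝ (fderiv ℝ f) z u (Pi.single i Complex.I)) / 2 := by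
  have h := diff_fderiv hf
  have h1 : ∀ v, DifferentiableAt ℝ (fun w => fderiv ℝ f w v) z := fun v => by fun_prop
  have := ((((h1 (Pi.single i 1)).hasFDerivAt.add
    ((h1 (Pi.single i Complex.I)).hasFDerivAt.const_mul Complex.I)).mul_const (2⁻¹ : ℂ)).fderiv)
  have e : wdb i f = fun w => (fderiv ℝ f w (Pi.single i 1)
    + Complex.I * fderiv ℝ f w (Pi.single i Complex.I)) * (2⁻¹ : ℂ) := by
    funext w; simp [wdb, div_eq_mul_inv]
  rw [e]
  erw [this]
  simp [fderiv_fderiv_apply hf]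
  ring

theorem wdb_wd {n : ℕ} (i j : Fin n) {f : (Fin n → ℂ) → ℂ} {z : Fin n → ℂ}
    (hf : ContDiffAt ℝ 2 f z) : wdb j (wd i f) z = wd i (wdb j f) z := by
  have hs : IsSymmSndFDerivAt ℝ f z := hf.isSymmSndFDerivAt (by simp)
  rw [wdb, wd, fderiv_wd i hf, fderiv_wd i hf, fderiv_wdb j hf, fderiv_wdb j hf]
  rw [hs (Pi.single j 1) (Pi.single i 1), hs (Pi.single j 1) (Pi.single i Complex.I),
    hs (Pi.single j Complex.I) (Pi.single i 1), hs (Pi.single j Complex.I) (Pi.single i Complex.I)]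
  ring

theorem diff_det {n : ℕ} {ι : Type*} [Fintype ι] [DecidableEq ι]
    {A : (Fin n → ℂ) → Matrix ι ι ℂ} {z : Fin n → ℂ} (hA : DM A z) :
    DifferentiableAt ℝ (fun w => (A w).det) z := by
  simp only [Matrix.det_apply']
  refine DifferentiableAt.fun_sum fun σ _ => (differentiableAt_const _).mul ?_
  exact (HasFDerivAt.finset_prod (u := Finset.univ) (g := fun c w => A w (σ c) c) fun c _ => (hA (σ c) c).hasFDerivAt).differentiableAt

theorem DM.inv {n : ℕ} {ι : Type*} [Fintype ι] [DecidableEq ι]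
    {A : (Fin n → ℂ) → Matrix ι ι ℂ} {z : Fin n → ℂ} (hA : DM A z) (hz : IsUnit (A z)) :
    DM (fun w => (A w)⁻¹) z := by
  intro a b
  simp only [Matrix.inv_def, Matrix.smul_apply, smul_eq_mul, Ring.inverse_eq_inv',
    Matrix.adjugate_apply]
  have hd : (A z).det ≠ 0 := ((Matrix.isUnit_iff_isUnit_det _).1 hz).ne_zero
  refine ((diff_det hA).inv hd).mul (diff_det ?_)
  intro c d
  by_cases h : c = b
  · subst h; simp
  · simpa [Matrix.updateRow_ne h] using hA c d

theorem Nmat_mul {n : ℕ} (a b : Matrix (Fin n) (Fin n) ℂ) : Nmat a * Nmat b = 0 := by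
  simp [Nmat, Matrix.fromBlocks_multiply]

theorem inv_left {n : ℕ} (a : Matrix (Fin n) (Fin n) ℂ) :
    (1 - Nmat a) * (1 + Nmat a) = 1 := by
  have := Nmat_mul a a
  noncomm_ring
  simp [this]

theorem inv_right {n : ℕ} (a : Matrix (Fin n) (Fin n) ℂ) :
    (1 + Nmat a) * (1 - Nmat a) = 1 := by
  have := Nmat_mul a a
  noncomm_ring
  simp [this]

theorem DM.Nmat {n : ℕ} {γ : (Fin n → ℂ) → Matrix (Fin n) (Fin n) ℂ} {z : Fin n → ℂ}
    (h : DM γ z) : DM (fun w => Nmat (γ w)) z := by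
  rintro (a | a) (b | b) <;> simp [_root_.Nmat]
  exact h a b

theorem DM.add {n : ℕ} {ι κ : Type*} {A B : (Fin n → ℂ) → Matrix ι κ ℂ} {z : Fin n → ℂ}
    (hA : DM A z) (hB : DM B z) : DM (fun w => A w + B w) z :=
  fun a b => (hA a b).add (hB a b)

theorem DM.sub {n : ℕ} {ι κ : Type*} {A B : (Fin n → ℂ) → Matrix ι κ ℂ} {z : Fin n → ℂ}
    (hA : DM A z) (hB : DM B z) : DM (fun w => A w - B w) z :=
  fun a b => (hA a b).sub (hB a b)

theorem DM.const {n : ℕ} {ι κ : Type*} (A : Matrix ι κ ℂ) (z : Fin n → ℂ) :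
    DM (fun _ => A) z := fun _ _ => differentiableAt_const _

theorem DM.conj {n : ℕ} {ι κ : Type*} {A : (Fin n → ℂ) → Matrix ι κ ℂ} {z : Fin n → ℂ}
    (hA : DM A z) : DM (fun w => (A w).map (starRingEnd ℂ)) z := fun a b =>
  (Complex.conjCLE : ℂ →L[ℝ] ℂ).differentiableAt.comp z (hA a b)

theorem wdM_Q {n : ℕ} (i : Fin n) (γ : (Fin n → ℂ) → Matrix (Fin n) (Fin n) ℂ)
    (z : Fin n → ℂ) : wdM i (fun w => 1 + Nmat (γ w)) z = Nmat (wdM i γ z) := by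
  ext (a | a) (b | b) <;> simp [wdM, Nmat, wd_const_add, wd_const]

theorem wdM_P {n : ℕ} (i : Fin n) (γ : (Fin n → ℂ) → Matrix (Fin n) (Fin n) ℂ)
    (z : Fin n → ℂ) (h : ∀ a b, wdb i (fun w => γ w a b) z = 0) :
    wdM i (fun w => 1 - Nmat ((γ w).map (starRingEnd ℂ))) z = 0 := by
  ext (a | a) (b | b) <;>
    simp [wdM, Nmat, sub_eq_add_neg, wd_const_add, wd_const, wd_neg, wd_conj, h]

theorem wdbM_Nmat {n : ℕ} (i : Fin n) (γ : (Fin n → ℂ) → Matrix (Fin n) (Fin n) ℂ)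
    (z : Fin n → ℂ) (h : ∀ a b, wdb i (fun w => γ w a b) z = 0) :
    wdbM i (fun w => Nmat (γ w)) z = 0 := by
  ext (a | a) (b | b) <;> simp [wdbM, Nmat, wdb_const, h]

theorem wdbM_Q {n : ℕ} (i : Fin n) (γ : (Fin n → ℂ) → Matrix (Fin n) (Fin n) ℂ)
    (z : Fin n → ℂ) (h : ∀ a b, wdb i (fun w => γ w a b) z = 0) :
    wdbM i (fun w => 1 + Nmat (γ w)) z = 0 := by
  ext (a | a) (b | b) <;> simp [wdbM, Nmat, wdb_const_add, wdb_const, h]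

theorem wdbM_Qinv {n : ℕ} (i : Fin n) (γ : (Fin n → ℂ) → Matrix (Fin n) (Fin n) ℂ)
    (z : Fin n → ℂ) (h : ∀ a b, wdb i (fun w => γ w a b) z = 0) :
    wdbM i (fun w => 1 - Nmat (γ w)) z = 0 := by
  ext (a | a) (b | b) <;>
    simp [wdbM, Nmat, sub_eq_add_neg, wdb_const_add, wdb_const, wdb_neg, h]

/-- if `γ` is holomorphic then the Chern curvature endomorphisms
`Ω_{ij̄} = −∂_{j̄}(G⁻¹·∂ᵢG)` transform by conjugation under the B-field transformation
`G̃ = (I − N(conj γ))·G·(I + N(γ))`, and consequently so do the curvatures traced with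
respect to any Hermitian positive-definite `g`. -/
theorem chernEndo_bField {n : ℕ} (hn : 0 < n)
    (U : Set (Fin n → ℂ)) (hU : IsOpen U)
    (γ : (Fin n → ℂ) → Matrix (Fin n) (Fin n) ℂ)
    (G : (Fin n → ℂ) → Matrix (Fin n ⊕ Fin n) (Fin n ⊕ Fin n) ℂ)
    (hγC2 : ∀ a b : Fin n, ContDiffOn ℝ 2 (fun z => γ z a b) U)
    (hγhol : ∀ z ∈ U, ∀ j : Fin n, ∀ a b : Fin n, wdb j (fun w => γ w a b) z = 0)
    (hGC2 : ∀ A B : Fin n ⊕ Fin n, ContDiffOn ℝ 2 (fun z => G z A B) U)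
    (hGinv : ∀ z ∈ U, IsUnit (G z)) :
    (∀ z ∈ U, ∀ i j : Fin n,
      -(wdbM j (fun w =>
            ((1 - Nmat ((γ w).map (starRingEnd ℂ))) * G w * (1 + Nmat (γ w)))⁻¹ *
              wdM i (fun v => (1 - Nmat ((γ v).map (starRingEnd ℂ))) * G v * (1 + Nmat (γ v))) w) z) =
        (1 - Nmat (γ z)) * (-(wdbM j (fun w => (G w)⁻¹ * wdM i G w) z)) * (1 + Nmat (γ z))) ∧
    (∀ g : (Fin n → ℂ) → Matrix (Fin n) (Fin n) ℂ, (∀ z ∈ U, (g z).PosDef) →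
      ∀ z ∈ U,
        (∑ i : Fin n, ∑ j : Fin n, (g z)⁻¹ j i •
            -(wdbM j (fun w =>
                ((1 - Nmat ((γ w).map (starRingEnd ℂ))) * G w * (1 + Nmat (γ w)))⁻¹ *
                  wdM i (fun v => (1 - Nmat ((γ v).map (starRingEnd ℂ))) * G v * (1 + Nmat (γ v))) w) z)) =
          (1 - Nmat (γ z)) *
            (∑ i : Fin n, ∑ j : Fin n, (g z)⁻¹ j i •
              -(wdbM j (fun w => (G w)⁻¹ * wdM i G w) z)) * (1 + Nmat (γ z))) := by
  have key : ∀ z ∈ U, ∀ i j : Fin n,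
      -(wdbM j (fun w =>
            ((1 - Nmat ((γ w).map (starRingEnd ℂ))) * G w * (1 + Nmat (γ w)))⁻¹ *
              wdM i (fun v => (1 - Nmat ((γ v).map (starRingEnd ℂ))) * G v * (1 + Nmat (γ v))) w) z) =
        (1 - Nmat (γ z)) * (-(wdbM j (fun w => (G w)⁻¹ * wdM i G w) z)) * (1 + Nmat (γ z)) := by
    intro z hz i j
    have cγ : ∀ w ∈ U, ∀ a b, ContDiffAt ℝ 2 (fun z => γ z a b) w := fun w hw a b =>
      (hγC2 a b).contDiffAt (hU.mem_nhds hw)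
    have cG : ∀ w ∈ U, ∀ a b, ContDiffAt ℝ 2 (fun z => G z a b) w := fun w hw a b =>
      (hGC2 a b).contDiffAt (hU.mem_nhds hw)
    have dγ : ∀ w ∈ U, DM γ w := fun w hw a b => (cγ w hw a b).differentiableAt (by norm_num)
    have dG : ∀ w ∈ U, DM G w := fun w hw a b => (cG w hw a b).differentiableAt (by norm_num)
    have dQ : ∀ w ∈ U, DM (fun w => 1 + Nmat (γ w)) w := fun w hw =>
      (DM.const 1 w).add (dγ w hw).Nmat
    have dQ' : ∀ w ∈ U, DM (fun w => 1 - Nmat (γ w)) w := fun w hw =>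
      (DM.const 1 w).sub (dγ w hw).Nmat
    have dP : ∀ w ∈ U, DM (fun w => 1 - Nmat ((γ w).map (starRingEnd ℂ))) w := fun w hw =>
      (DM.const 1 w).sub (dγ w hw).conj.Nmat
    have dθ : DM (fun w => (G w)⁻¹ * wdM i G w) z :=
      ((dG z hz).inv (hGinv z hz)).mul fun a b => diff_wd i (cG z hz a b)
    have dwγ : DM (wdM i γ) z := fun a b => diff_wd i (cγ z hz a b)
    have e : ∀ w ∈ U,
        ((1 - Nmat ((γ w).map (starRingEnd ℂ))) * G w * (1 + Nmat (γ w)))⁻¹ *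
          wdM i (fun v => (1 - Nmat ((γ v).map (starRingEnd ℂ))) * G v * (1 + Nmat (γ v))) w
        = (1 - Nmat (γ w)) * ((G w)⁻¹ * wdM i G w) * (1 + Nmat (γ w)) + Nmat (wdM i γ w) := by
      intro w hw
      rw [wdM_mul i ((dP w hw).mul (dG w hw)) (dQ w hw), wdM_mul i (dP w hw) (dG w hw),
        wdM_P i γ w (hγhol w hw i), wdM_Q]
      have hG : (G w)⁻¹ * G w = 1 :=
        Matrix.nonsing_inv_mul _ ((Matrix.isUnit_iff_isUnit_det _).1 (hGinv w hw))
      have hPi : (1 - Nmat ((γ w).map (starRingEnd ℂ)))⁻¹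
          = 1 + Nmat ((γ w).map (starRingEnd ℂ)) := Matrix.inv_eq_left_inv (inv_right _)
      have hQi : (1 + Nmat (γ w))⁻¹ = 1 - Nmat (γ w) := Matrix.inv_eq_left_inv (inv_left _)
      rw [Matrix.mul_inv_rev, Matrix.mul_inv_rev, hPi, hQi]
      have hP := inv_right ((γ w).map (starRingEnd ℂ))
      have hN : (1 - Nmat (γ w)) * Nmat (wdM i γ w) = Nmat (wdM i γ w) := by
        rw [sub_mul, Nmat_mul, one_mul, sub_zero]
      generalize 1 - Nmat ((γ w).map (starRingEnd ℂ)) = P at *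
      generalize 1 + Nmat ((γ w).map (starRingEnd ℂ)) = P' at *
      generalize Nmat (wdM i γ w) = M at *
      generalize 1 - Nmat (γ w) = Q' at *
      generalize 1 + Nmat (γ w) = Q at *
      rw [zero_mul, zero_add, mul_add]
      congr 1
      · calc _ = Q' * ((G w)⁻¹ * ((P' * P) * wdM i G w)) * Q := by simp only [mul_assoc]
          _ = _ := by rw [hP, one_mul]
      · calc _ = Q' * ((G w)⁻¹ * ((P' * P) * G w)) * M := by simp only [mul_assoc]
          _ = _ := by rw [hP, one_mul, hG, mul_one, hN]
    have hz2 : ∀ a b, wdb j (fun w => wdM i γ w a b) z = 0 := by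
      intro a b
      have h0 : (wdb j (fun w => γ w a b)) =ᶠ[nhds z] fun _ => 0 := by
        filter_upwards [hU.mem_nhds hz] with w hw
        exact hγhol w hw j a b
      have := wdb_wd i j (cγ z hz a b)
      change wdb j (wd i (fun w => γ w a b)) z = 0
      rw [this, wd, h0.fderiv_eq]
      simp
    rw [wdbM_congr j hU hz e,
      wdbM_add j (((dQ' z hz).mul dθ).mul (dQ z hz)) dwγ.Nmat,
      wdbM_mul j ((dQ' z hz).mul dθ) (dQ z hz), wdbM_mul j (dQ' z hz) dθ,
      wdbM_Nmat j _ z hz2, wdbM_Q j γ z (hγhol z hz j), wdbM_Qinv j γ z (hγhol z hz j)]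
    simp
  refine ⟨key, fun g _ z hz => ?_⟩
  simp only [Finset.mul_sum, Finset.sum_mul]
  refine Finset.sum_congr rfl fun i _ => Finset.sum_congr rfl fun j _ => ?_
  rw [key z hz i j, Matrix.mul_smul, Matrix.smul_mul]
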